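/- Let r_1, …, r_n be distinct elements of a finite set R = {r_1, …, r_n}, let ▷_1, …, ▷_{n−1} ∈ {>, =} specify a given ranking with rank function π, let 1 ≤ k ≤ n, and let f : R → ℝ be a scoring function with score-based rank function ρ_f. Then the following two conditions hold simultaneously: (i) f(r_j) ▷_j f(r_{j+1}) for every 1 ≤ j < k, and (ii) f(r_k) ≥ f(r_j) for every k < j ≤ n, if and only if Σ_{j=1}^{k} |ρ_f(r_j) − π(r_j)| = 0, i.e., ρ_f(r_j) = π(r_j) for every 1 ≤ j ≤ k. -/

import Mathlib

/-!
Both conditions are equivalent to a third one: for every position `j < k` and every `i < n`,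
`f (r i) > f (r j)` exactly when `i` is above `j` in the given ranking
(`conditions_iff_agree`, `card_eq_iff_agree`).

For the local conditions this is transitivity along the chain `r 0, …, r (k-1)`. For the ranks,
both rank functions count strict predecessors, so equal predecessor sets give equal ranks.
Conversely, if the ranks agree and `i` is above `j < k`, then `i` has a smaller given rank,
hence a smaller score-based rank, hence a larger score; so the predecessors of `j` in the given
ranking are among its predecessors by score, and equal cardinality forces the two sets to coincide.
-/

open Classical

/-- `above b i j` means the element at position `i` is strictly above the element at
position `j` in the given ranking specified by the relation symbols
`b : ℕ → Bool` (`b l = true` means the relation `▷` between positions `l` and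
`l+1` is `>`; `false` means `=`). Positions are 0-indexed. -/
def above (b : ℕ → Bool) (i j : ℕ) : Prop :=
  i < j ∧ ∃ l, i ≤ l ∧ l < j ∧ b l = true

/-- The rank `π` in the given ranking of the element at position `j` (0-indexed). -/
noncomputable def givenRank (n : ℕ) (b : ℕ → Bool) (j : ℕ) : ℕ :=
  1 + ((Finset.range n).filter (fun i => above b i j)).card

/-- The score-based rank `ρ_f` of `x` in the finite set `R`. -/
noncomputable def scoreRank {α : Type*} (R : Finset α) (f : α → ℝ) (x : α) : ℕ :=
  1 + (R.filter (fun s => f s > f x)).card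

/-- `g i` and `g (i + d)` compare along the top-`k` chain as the relation symbols
between them dictate. -/
lemma chain_compare {k : ℕ} {b : ℕ → Bool} {g : ℕ → ℝ}
    (h : ∀ j, j + 1 < k → (if b j then g j > g (j + 1) else g j = g (j + 1)))
    (i d : ℕ) (hd : i + d < k) :
    g (i + d) ≤ g i ∧ (g i > g (i + d) ↔ above b i (i + d)) := by
  induction d with
  | zero => simp [above]
  | succ d ih =>
    obtain ⟨hle, hiff⟩ := ih (by omega)
    have hstep := h (i + d) (by omega)
    rw [← Nat.add_assoc]
    by_cases hb : b (i + d) = true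
    · rw [if_pos hb] at hstep
      have hlt : g (i + d + 1) < g i := by linarith
      exact ⟨hlt.le, fun _ => ⟨by omega, i + d, by omega, by omega, hb⟩, fun _ => hlt⟩
    · rw [if_neg hb] at hstep
      rw [← hstep]
      refine ⟨hle, hiff.trans ⟨?_, ?_⟩⟩
      · rintro ⟨_, l, h1, h2, h3⟩
        exact ⟨by omega, l, h1, by omega, h3⟩
      · rintro ⟨_, l, h1, h2, h3⟩
        have hl : l ≠ i + d := by
          rintro rfl
          exact hb h3
        exact ⟨by omega, l, h1, by omega, h3⟩

lemma conditions_iff_agree {n k : ℕ} (hk : 1 ≤ k) (hkn : k ≤ n) (b : ℕ → Bool) (g : ℕ → ℝ) :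
    ((∀ j, j + 1 < k → (if b j then g j > g (j + 1) else g j = g (j + 1))) ∧
      (∀ j, k ≤ j → j < n → g (k - 1) ≥ g j)) ↔
      ∀ j < k, ∀ i < n, (g i > g j ↔ above b i j) := by
  constructor
  · rintro ⟨h1, h2⟩ j hj i hi
    rcases le_total i j with hij | hij
    · obtain ⟨d, rfl⟩ := Nat.exists_eq_add_of_le hij
      exact (chain_compare h1 i d hj).2
    · have hna : ¬ above b i j := fun h => absurd h.1 (by omega)
      refine iff_of_false (not_lt.2 ?_) hna
      rcases lt_or_ge i k with hik | hik
      · obtain ⟨d, rfl⟩ := Nat.exists_eq_add_of_le hij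
        exact (chain_compare h1 j d hik).1
      · have h3 := (chain_compare h1 j (k - 1 - j) (by omega)).1
        rw [show j + (k - 1 - j) = k - 1 by omega] at h3
        exact (h2 i hik hi).trans h3
  · intro h
    refine ⟨fun j hj => ?_, fun j hkj hjn => ?_⟩
    · have h1 := h (j + 1) hj j (by omega)
      have h2 := h j (by omega) (j + 1) (by omega)
      split_ifs with hb
      · exact h1.2 ⟨by omega, j, le_rfl, by omega, hb⟩
      · apply le_antisymm
        · refine not_lt.1 fun hlt => ?_
          obtain ⟨_, l, h3, h4, h5⟩ := h1.1 hlt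
          obtain rfl : l = j := by omega
          exact hb h5
        · refine not_lt.1 fun hlt => ?_
          exact absurd (h2.1 hlt).1 (by omega)
    · refine not_lt.1 fun hlt => ?_
      exact absurd ((h (k - 1) (by omega) j hjn).1 hlt).1 (by omega)

lemma card_eq_iff_agree {n k : ℕ} (b : ℕ → Bool) (g : ℕ → ℝ) :
    (∀ j < k, ((Finset.range n).filter (fun i => g i > g j)).card =
        ((Finset.range n).filter (fun i => above b i j)).card) ↔
      ∀ j < k, ∀ i < n, (g i > g j ↔ above b i j) := by
  constructor
  · intro h j hj
    have hsub : (Finset.range n).filter (fun i => above b i j) ⊆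
        (Finset.range n).filter (fun i => g i > g j) := by
      intro i hi
      rw [Finset.mem_filter] at hi ⊢
      refine ⟨hi.1, ?_⟩
      obtain ⟨hij, l, hl1, hl2, hl3⟩ := hi.2
      -- `i` has strictly fewer given predecessors than `j`, since `i` itself precedes `j`.
      have hlt : ((Finset.range n).filter (fun m => above b m i)).card <
          ((Finset.range n).filter (fun m => above b m j)).card := by
        apply Finset.card_lt_card
        rw [Finset.ssubset_iff_of_subset]
        · exact ⟨i, Finset.mem_filter.2 hi, fun hmem =>
            absurd (Finset.mem_filter.1 hmem).2.1 (lt_irrefl i)⟩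
        · intro m hm
          rw [Finset.mem_filter] at hm ⊢
          obtain ⟨hm1, hm2, p, hp1, hp2, hp3⟩ := hm
          exact ⟨hm1, by omega, p, hp1, by omega, hp3⟩
      rw [← h i (by omega), ← h j hj] at hlt
      by_contra hle
      refine absurd hlt (not_lt.2 (Finset.card_le_card ?_))
      intro m hm
      rw [Finset.mem_filter] at hm ⊢
      exact ⟨hm.1, lt_of_le_of_lt (not_lt.1 hle) hm.2⟩
    have heq := Finset.eq_of_subset_of_card_le hsub (h j hj).le
    intro i hi
    have hmem := Finset.ext_iff.1 heq i
    simp only [Finset.mem_filter, Finset.mem_range, hi, true_and] at hmem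
    exact hmem.symm
  · intro h j hj
    congr 1
    apply Finset.filter_congr
    intro i hi
    exact h j hj i (Finset.mem_range.1 hi)

/-- (i) `f (r j) ▷_j f (r (j+1))` for every adjacent pair among the
top-`k` positions, together with (ii) `f (r (k-1)) ≥ f (r j)` for every
lower-ranked position `j`, holds iff the total position error over the top-`k`
tuples, `∑_{j<k} |ρ_f (r j) − π (r j)|`, is zero. (Positions are 0-indexed, so
the `k`-th tuple is `r (k-1)` and the lower-ranked tuples are `r k, …, r (n-1)`.) -/
theorem stmt1 {α : Type*} (n k : ℕ) (hk : 1 ≤ k) (hkn : k ≤ n) (r : ℕ → α)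
    (hr : ∀ i j, i < n → j < n → r i = r j → i = j)
    (b : ℕ → Bool) (R : Finset α) (hR : R = (Finset.range n).image r)
    (f : α → ℝ) :
    ((∀ j, j + 1 < k →
        (if b j then f (r j) > f (r (j + 1)) else f (r j) = f (r (j + 1)))) ∧
      (∀ j, k ≤ j → j < n → f (r (k - 1)) ≥ f (r j))) ↔
      ∑ j ∈ Finset.range k,
        |(scoreRank R f (r j) : ℤ) - (givenRank n b j : ℤ)| = 0 := by
  have hcard : ∀ j, (R.filter (fun s => f s > f (r j))).card =
      ((Finset.range n).filter (fun i => f (r i) > f (r j))).card := by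
    intro j
    rw [hR, Finset.filter_image, Finset.card_image_of_injOn]
    intro x hx y hy hxy
    simp only [Finset.coe_filter, Finset.mem_range, Set.mem_ofPred_eq] at hx hy
    exact hr x y hx.1 hy.1 hxy
  rw [conditions_iff_agree hk hkn b (fun i => f (r i)),
    ← card_eq_iff_agree b (fun i => f (r i)),
    Finset.sum_eq_zero_iff_of_nonneg (fun _ _ => abs_nonneg _)]
  refine forall_congr' fun j => ?_
  rw [Finset.mem_range, abs_eq_zero, sub_eq_zero, Nat.cast_inj, scoreRank, givenRank, hcard,
    Nat.add_left_cancel_iff]
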